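/- Let {ε_n} be a sequence in (0,1) with ε_n → 0 and n·ε_n → ∞. Then for all a ∈ ℝ and t > 0, the limit as n → ∞ of (π(e^{(n+a+ε_n)/t}) − π(e^{(n+a)/t})) / (e^{n/t} ε_n / n) equals e^{a/t}, where π is the prime counting function. -/

import Mathlib

open Real Filter

/-- Prime counting function at a real argument: number of primes `≤ x`. -/
noncomputable def primePi (x : ℝ) : ℕ := Nat.primeCounting ⌊x⌋₊

/-!
`(s - 1) ζ(s)` is `O(|Im s| ^ (1 + 2η))` slightly to the left of `Re s = 1`, by Euler–Maclaurin
summation, and by the 3-4-1 inequality it is at least a constant times `|Im s| ^ (1 - 8η)` on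
`1 ≤ Re s ≤ 2`, for every small `η > 0`. Hence its logarithmic derivative `L` is
`O(|Im s| ^ (10η))` on discs of radius comparable to `|Im s| ^ (-10η)`, and Cauchy's estimate shows
that any prescribed number of derivatives of `(L(s) + 1) / s ^ 2` are integrable up to `Re s = 1`.
This quotient is, up to sign, the Laplace transform of the primitive of `ψ(e^u) - e^u`, so Fourier
inversion bounds that primitive by `O(e^v / v ^ k)` for every `k`; since `ψ` is monotone, the
difference quotients of the primitive control `ψ(e^v) - e^v` itself. This gives
`π(x) = x / log x + O(x / log² x)`.

On `[x, x e^δ]` the main term grows by `(1 + o(1)) δ x / log x`, and the error `O(x / log² x)` is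
negligible against it exactly when `δ log x → ∞`. For `x = e^((n + a) / t)` and `δ = ε_n / t` this
is `n ε_n → ∞`.
-/

/-- The Euler–Maclaurin truncation at `N` of `(s - 1) ζ(s)`. -/
noncomputable def zetaTrunc (N : ℕ) (s : ℂ) : ℂ :=
  (s - 1) * ∑ n ∈ Finset.range N, ((n : ℂ) + 1) ^ (-s) + (N : ℂ) ^ (1 - s)

/-- The increment of the Euler–Maclaurin truncation `zetaTrunc` from `m` to `m + 1`. -/
noncomputable def zetaStep (m : ℕ) (s : ℂ) : ℂ :=
  (s - 1) * ((m : ℂ) + 1) ^ (-s) + ((m : ℂ) + 1) ^ (1 - s) - (m : ℂ) ^ (1 - s)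

lemma zetaTrunc_add_sum_zetaStep (N K : ℕ) (s : ℂ) :
    zetaTrunc N s + ∑ k ∈ Finset.range K, zetaStep (N + k) s = zetaTrunc (N + K) s := by
  induction K with
  | zero => simp
  | succ K ih =>
    rw [Finset.sum_range_succ, ← add_assoc, ih, ← add_assoc N K 1]
    simp only [zetaTrunc, zetaStep, Finset.sum_range_succ]
    push_cast
    ring

lemma differentiable_zetaTrunc {N : ℕ} (hN : N ≠ 0) : Differentiable ℂ (zetaTrunc N) := by
  have hN' : (N : ℂ) ≠ 0 := Nat.cast_ne_zero.mpr hN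
  have hsucc (n : ℕ) : (n : ℂ) + 1 ≠ 0 := Nat.cast_add_one_ne_zero n
  intro s
  refine .add (.mul (by fun_prop) (.fun_sum fun n _ ↦ ?_)) ?_
  · exact .const_cpow (by fun_prop) (.inl (hsucc n))
  · exact .const_cpow (by fun_prop) (.inl hN')

lemma differentiable_zetaStep {m : ℕ} (hm : m ≠ 0) : Differentiable ℂ (zetaStep m) := by
  have h : zetaStep m = fun s ↦ zetaTrunc (m + 1) s - zetaTrunc m s := by
    ext s
    simpa [eq_sub_iff_add_eq'] using zetaTrunc_add_sum_zetaStep m 1 s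
  exact h ▸ (differentiable_zetaTrunc m.succ_ne_zero).sub (differentiable_zetaTrunc hm)

lemma hasDerivAt_cpow_add_linear (m : ℝ) (s : ℂ) {x : ℝ} (hx : 0 < x) :
    HasDerivAt (fun x : ℝ ↦ (x : ℂ) ^ (1 - s) + (s - 1) * (x - m) * (x : ℂ) ^ (-s))
      (-s * (s - 1) * (x - m) * (x : ℂ) ^ (-s - 1)) x := by
  have hslit : (x : ℂ) ∈ Complex.slitPlane := Complex.ofReal_mem_slitPlane.mpr hx
  have hid : HasDerivAt (fun z : ℂ ↦ z) 1 (x : ℂ) := hasDerivAt_id _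
  have hlin := ((hid.sub_const (m : ℂ)).const_mul (s - 1)).mul (hid.cpow_const (c := -s) hslit)
  refine (((hid.cpow_const (c := 1 - s) hslit).add hlin).comp_ofReal).congr_deriv ?_
  rw [show 1 - s - 1 = -s by ring]
  ring

-- `zetaStep m s` is the increment over `[m, m + 1]` of the function just differentiated, whose
-- derivative carries the factor `x - m ≤ 1`.
lemma norm_zetaStep_le {m : ℕ} (hm : m ≠ 0) {s : ℂ} (hs : 0 < s.re) :
    ‖zetaStep m s‖ ≤ ‖s‖ * ‖s - 1‖ * (m : ℝ) ^ (-s.re - 1) := by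
  have hm0 : (0 : ℝ) < m := Nat.cast_pos.mpr hm.bot_lt
  have hbound : ∀ x ∈ Set.Ico (m : ℝ) (m + 1),
      ‖-s * (s - 1) * (x - (m : ℝ)) * (x : ℂ) ^ (-s - 1)‖ ≤
        ‖s‖ * ‖s - 1‖ * (m : ℝ) ^ (-s.re - 1) := by
    intro x hx
    have hlen : ‖(x : ℂ) - (m : ℝ)‖ ≤ 1 := by
      rw [← Complex.ofReal_sub, Complex.norm_real, Real.norm_of_nonneg (by linarith [hx.1])]
      linarith [hx.2]
    have hpow : ‖(x : ℂ) ^ (-s - 1)‖ ≤ (m : ℝ) ^ (-s.re - 1) := by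
      rw [Complex.norm_cpow_eq_rpow_re_of_pos (hm0.trans_le hx.1)]
      refine Real.rpow_le_rpow_of_nonpos hm0 hx.1 ?_
      rw [Complex.sub_re, Complex.neg_re, Complex.one_re]
      linarith
    calc _ ≤ ‖s‖ * ‖s - 1‖ * 1 * (m : ℝ) ^ (-s.re - 1) := by
          rw [norm_mul, norm_mul, norm_mul, norm_neg]
          gcongr
      _ = _ := by rw [mul_one]
  have h := norm_image_sub_le_of_norm_deriv_le_segment'
    (fun x hx ↦ (hasDerivAt_cpow_add_linear m s (hm0.trans_le hx.1)).hasDerivWithinAt) hbound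
    (m + 1) (Set.right_mem_Icc.mpr (by linarith))
  convert h using 1
  · simp only [zetaStep]
    push_cast
    ring_nf
  · ring

lemma summable_nat_add_rpow (N : ℕ) {r : ℝ} (hr : r < -1) :
    Summable fun k : ℕ ↦ ((N + k : ℕ) : ℝ) ^ r := by
  simpa only [add_comm N] using (summable_nat_add_iff N).mpr (Real.summable_nat_rpow.mpr hr)

lemma summable_zetaStep {N : ℕ} (hN : N ≠ 0) {s : ℂ} (hs : 0 < s.re) :
    Summable fun k ↦ zetaStep (N + k) s :=
  .of_norm_bounded ((summable_nat_add_rpow N (by linarith)).mul_left (‖s‖ * ‖s - 1‖))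
    fun k ↦ norm_zetaStep_le (by omega) hs

lemma riemannZeta₁_of_ne_one {s : ℂ} (hs : s ≠ 1) : riemannZeta₁ s = (s - 1) * riemannZeta s := by
  rw [riemannZeta_eq_inv_sub_mul hs, mul_inv_cancel_left₀ (sub_ne_zero.mpr hs)]

lemma tendsto_zetaTrunc {s : ℂ} (hs : 1 < s.re) :
    Tendsto (zetaTrunc · s) atTop (nhds (riemannZeta₁ s)) := by
  have hsum : Tendsto (fun N : ℕ ↦ ∑ n ∈ Finset.range N, ((n : ℂ) + 1) ^ (-s)) atTop
      (nhds (riemannZeta s)) := by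
    have hsummable : Summable fun n : ℕ ↦ ((n : ℂ) + 1) ^ (-s) := by
      simpa [Complex.cpow_neg] using
        (summable_nat_add_iff 1).mpr (Complex.summable_one_div_nat_cpow.mpr hs)
    simpa [zeta_eq_tsum_one_div_nat_add_one_cpow hs, Complex.cpow_neg]
      using hsummable.hasSum.tendsto_sum_nat
  have hpow : Tendsto (fun N : ℕ ↦ (N : ℂ) ^ (1 - s)) atTop (nhds 0) := by
    rw [tendsto_zero_iff_norm_tendsto_zero]
    refine ((tendsto_rpow_neg_atTop (sub_pos.mpr hs)).comp tendsto_natCast_atTop_atTop).congr' ?_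
    filter_upwards [eventually_gt_atTop 0] with N hN
    simp [Complex.norm_natCast_cpow_of_pos hN]
  rw [riemannZeta₁_of_ne_one (by rintro rfl; simp at hs)]
  simpa [zetaTrunc] using (hsum.const_mul (s - 1)).add hpow

lemma differentiableAt_tsum_zetaStep {N : ℕ} (hN : N ≠ 0) {s : ℂ} (hs : 0 < s.re) :
    DifferentiableAt ℂ (fun z ↦ ∑' k, zetaStep (N + k) z) s := by
  have hmem : Metric.ball s (s.re / 2) ∈ nhds s := Metric.ball_mem_nhds s (by linarith)
  refine (Complex.differentiableOn_tsum_of_summable_norm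
    ((summable_nat_add_rpow N (r := -(s.re / 2) - 1) (by linarith)).mul_left
      ((‖s‖ + s.re / 2) * (‖s‖ + s.re / 2 + 1)))
    (fun k ↦ (differentiable_zetaStep (by omega)).differentiableOn) Metric.isOpen_ball
    fun k z hz ↦ ?_).differentiableAt hmem
  have hdist : ‖z - s‖ ≤ s.re / 2 := (mem_ball_iff_norm.mp hz).le
  have hre : s.re / 2 ≤ z.re := by
    have := (abs_le.mp ((Complex.abs_re_le_norm (z - s)).trans hdist)).1
    rw [Complex.sub_re] at this
    linarith
  have hnorm : ‖z‖ ≤ ‖s‖ + s.re / 2 := by linarith [norm_sub_norm_le z s]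
  have hnorm' : ‖z - 1‖ ≤ ‖s‖ + s.re / 2 + 1 := by
    linarith [norm_sub_le z 1, norm_one (α := ℂ)]
  have hone : (1 : ℝ) ≤ (N + k : ℕ) := Nat.one_le_cast.mpr (by omega)
  refine (norm_zetaStep_le (by omega) (by linarith)).trans ?_
  gcongr

theorem riemannZeta₁_eq_zetaTrunc_add_tsum {N : ℕ} (hN : N ≠ 0) {s : ℂ} (hs : 0 < s.re) :
    riemannZeta₁ s = zetaTrunc N s + ∑' k, zetaStep (N + k) s := by
  let U : Set ℂ := {z | 0 < z.re}
  have hU : IsOpen U := isOpen_lt continuous_const Complex.continuous_re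
  have hlhs : AnalyticOnNhd ℂ riemannZeta₁ U :=
    differentiable_riemannZeta₁.differentiableOn.analyticOnNhd hU
  have hrhs : AnalyticOnNhd ℂ (fun z ↦ zetaTrunc N z + ∑' k, zetaStep (N + k) z) U :=
    DifferentiableOn.analyticOnNhd (fun z hz ↦ ((differentiable_zetaTrunc hN z).add
      (differentiableAt_tsum_zetaStep hN hz)).differentiableWithinAt) hU
  refine hlhs.eqOn_of_preconnected_of_eventuallyEq hrhs
    (convex_halfSpace_re_gt 0).isPreconnected (show (2 : ℂ) ∈ U by simp [U]) ?_ hs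
  have htwo : {z : ℂ | 1 < z.re} ∈ nhds (2 : ℂ) :=
    (isOpen_lt continuous_const Complex.continuous_re).mem_nhds (by simp)
  filter_upwards [htwo] with z hz
  have hz' : 1 < z.re := hz
  have htrunc := ((summable_zetaStep hN (s := z) (by linarith)).hasSum.tendsto_sum_nat).const_add
    (zetaTrunc N z)
  simp_rw [zetaTrunc_add_sum_zetaStep, add_comm N] at htrunc
  simpa only [add_comm _ N] using
    tendsto_nhds_unique ((tendsto_zetaTrunc hz').comp (tendsto_add_atTop_nat N)) htrunc

/-- The weight `1 + |Im s|`, against which growth along vertical lines is measured. -/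
noncomputable def height (s : ℂ) : ℝ := 1 + |s.im|

lemma one_le_height (s : ℂ) : 1 ≤ height s := le_add_of_nonneg_right (abs_nonneg _)

lemma height_pos (s : ℂ) : 0 < height s := one_pos.trans_le (one_le_height s)

lemma height_rpow_neg_le_one (s : ℂ) {b : ℝ} (hb : 0 ≤ b) : height s ^ (-b) ≤ 1 :=
  Real.rpow_le_one_of_one_le_of_nonpos (one_le_height s) (neg_nonpos.mpr hb)

lemma norm_le_re_add_height {s : ℂ} (hs : 0 ≤ s.re) : ‖s‖ ≤ s.re + (height s - 1) := by
  simpa [height, abs_of_nonneg hs] using Complex.norm_le_abs_re_add_abs_im s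

lemma height_le_two_mul_norm {s : ℂ} (hs : 1 ≤ s.re) : height s ≤ 2 * ‖s‖ := by
  have hre := (le_abs_self _).trans (Complex.abs_re_le_norm s)
  have him := Complex.abs_im_le_norm s
  simp only [height]
  linarith

lemma height_le_add_dist (s z : ℂ) : height z ≤ height s + ‖z - s‖ := by
  have him := Complex.abs_im_le_norm (z - s)
  rw [Complex.sub_im] at him
  have := abs_sub_abs_le_abs_sub z.im s.im
  simp only [height]
  linarith

section Growth

variable {a : ℝ}

lemma norm_sum_cpow_neg_le (ha : 0 < a) (N : ℕ) {s : ℂ} (hs : 1 - a ≤ s.re) :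
    ‖∑ n ∈ Finset.range N, ((n : ℂ) + 1) ^ (-s)‖ ≤
      (∑' k : ℕ, ((1 + k : ℕ) : ℝ) ^ (-a - 1)) * (N : ℝ) ^ (2 * a) := by
  have hterm : ∀ n ∈ Finset.range N, ‖((n : ℂ) + 1) ^ (-s)‖ ≤
      ((1 + n : ℕ) : ℝ) ^ (-a - 1) * (N : ℝ) ^ (2 * a) := by
    intro n hn
    have hone : (1 : ℝ) ≤ (1 + n : ℕ) := Nat.one_le_cast.mpr (by omega)
    have hle : ((1 + n : ℕ) : ℝ) ≤ N := Nat.cast_le.mpr (by have := Finset.mem_range.mp hn; omega)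
    calc ‖((n : ℂ) + 1) ^ (-s)‖ = ((1 + n : ℕ) : ℝ) ^ (-s.re) := by
          rw [← Complex.neg_re, ← Complex.norm_natCast_cpow_of_pos (by omega), Nat.cast_add,
            Nat.cast_one, add_comm]
      _ ≤ ((1 + n : ℕ) : ℝ) ^ ((-a - 1) + 2 * a) := by gcongr; linarith
      _ = ((1 + n : ℕ) : ℝ) ^ (-a - 1) * ((1 + n : ℕ) : ℝ) ^ (2 * a) :=
          Real.rpow_add (by linarith) _ _
      _ ≤ _ := by gcongr
  refine (norm_sum_le_of_le _ hterm).trans ?_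
  rw [← Finset.sum_mul]
  gcongr
  exact (summable_nat_add_rpow 1 (by linarith)).sum_le_tsum _ fun k _ ↦ by positivity

lemma norm_tsum_zetaStep_le (ha : 0 < a) (ha' : a ≤ 1 / 2) {N : ℕ} (hN : N ≠ 0) {s : ℂ}
    (hs : 1 - a ≤ s.re) :
    ‖∑' k, zetaStep (N + k) s‖ ≤
      ‖s‖ * ‖s - 1‖ * ((∑' k : ℕ, ((1 + k : ℕ) : ℝ) ^ (-a - 1)) * (N : ℝ) ^ (2 * a - 1)) := by
  rw [← tsum_mul_right, ← tsum_mul_left]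
  refine tsum_of_norm_bounded (((summable_nat_add_rpow 1 (by linarith)).mul_right _).mul_left
    _).hasSum fun k ↦ (norm_zetaStep_le (by omega) (by linarith)).trans ?_
  have hone : (1 : ℝ) ≤ (N + k : ℕ) := Nat.one_le_cast.mpr (by omega)
  gcongr
  calc ((N + k : ℕ) : ℝ) ^ (-s.re - 1) ≤ ((N + k : ℕ) : ℝ) ^ ((-a - 1) + (2 * a - 1)) := by
        gcongr
        linarith
    _ = ((N + k : ℕ) : ℝ) ^ (-a - 1) * ((N + k : ℕ) : ℝ) ^ (2 * a - 1) :=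
        Real.rpow_add (by linarith) _ _
    _ ≤ ((1 + k : ℕ) : ℝ) ^ (-a - 1) * (N : ℝ) ^ (2 * a - 1) := by
        have hN1 : 1 ≤ N := Nat.one_le_iff_ne_zero.mpr hN
        have hNk : ((1 + k : ℕ) : ℝ) ≤ (N + k : ℕ) := by gcongr
        exact mul_le_mul (Real.rpow_le_rpow_of_nonpos (by positivity) hNk (by linarith))
          (Real.rpow_le_rpow_of_nonpos (by positivity) (by simp) (by linarith))
          (by positivity) (by positivity)

lemma rpow_le_four_mul_rpow (ha : 0 < a) (ha' : a ≤ 1 / 2) {x y : ℝ} (hx : 0 ≤ x)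
    (hy : 0 ≤ y) (hxy : y ≤ 2 * x) : y ^ (1 + 2 * a) ≤ 4 * x ^ (1 + 2 * a) :=
  calc y ^ (1 + 2 * a) ≤ (2 * x) ^ (1 + 2 * a) := by gcongr
    _ = 2 ^ (1 + 2 * a) * x ^ (1 + 2 * a) := Real.mul_rpow zero_le_two hx
    _ ≤ 2 ^ (2 : ℝ) * x ^ (1 + 2 * a) := by
        gcongr
        · exact one_le_two
        · linarith
    _ = _ := by norm_num

lemma norm_zetaTrunc_le (ha : 0 < a) {N : ℕ} (hN : N ≠ 0) {s : ℂ} (hs : 1 - a ≤ s.re) :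
    ‖zetaTrunc N s‖ ≤
      ‖s - 1‖ * ((∑' k : ℕ, ((1 + k : ℕ) : ℝ) ^ (-a - 1)) * (N : ℝ) ^ (2 * a)) + (N : ℝ) ^ a := by
  have hcpow : ‖(N : ℂ) ^ (1 - s)‖ ≤ (N : ℝ) ^ a := by
    rw [Complex.norm_natCast_cpow_of_pos (Nat.pos_of_ne_zero hN)]
    refine Real.rpow_le_rpow_of_exponent_le (Nat.one_le_cast.mpr (Nat.pos_of_ne_zero hN)) ?_
    rw [Complex.sub_re, Complex.one_re]
    linarith
  refine (norm_add_le _ _).trans (add_le_add ?_ hcpow)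
  rw [norm_mul]
  gcongr
  exact norm_sum_cpow_neg_le ha N hs

-- Truncate at `N ≍ height s`, where both parts of the Euler–Maclaurin formula have the same size.
theorem exists_norm_riemannZeta₁_le (ha : 0 < a) (ha' : a ≤ 1 / 2) :
    ∃ C > 0, ∀ s : ℂ, 1 - a ≤ s.re → s.re ≤ 3 → ‖riemannZeta₁ s‖ ≤ C * height s ^ (1 + 2 * a) := by
  set K : ℝ := ∑' k : ℕ, ((1 + k : ℕ) : ℝ) ^ (-a - 1)
  have : 0 ≤ K := tsum_nonneg fun k ↦ by positivity
  refine ⟨(8 * K + 1) * 4, by positivity, fun s hs hs3 ↦ ?_⟩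
  have hT := one_le_height s
  obtain ⟨N, hTN, hNT⟩ : ∃ N : ℕ, height s ≤ N ∧ (N : ℝ) ≤ 2 * height s :=
    ⟨⌈height s⌉₊, Nat.le_ceil _, by linarith [Nat.ceil_lt_add_one (height_pos s).le]⟩
  have hN1 : (1 : ℝ) ≤ N := hT.trans hTN
  have hN0 : (0 : ℝ) < N := by linarith
  have hN : N ≠ 0 := Nat.cast_ne_zero.mp hN0.ne'
  have hs_norm : ‖s‖ ≤ 3 * N := by linarith [norm_le_re_add_height (s := s) (by linarith)]
  have hs_norm' : ‖s - 1‖ ≤ 2 * N := by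
    have hre : |s.re - 1| ≤ 2 := abs_le.mpr ⟨by linarith, by linarith⟩
    have := Complex.norm_le_abs_re_add_abs_im (s - 1)
    simp only [Complex.sub_re, Complex.sub_im, Complex.one_re, Complex.one_im, sub_zero] at this
    simp only [height] at hTN
    linarith
  have hpow_le : (N : ℝ) ^ a ≤ (N : ℝ) ^ (1 + 2 * a) :=
    Real.rpow_le_rpow_of_exponent_le hN1 (by linarith)
  have htrunc : ‖zetaTrunc N s‖ ≤ 2 * N * (K * (N : ℝ) ^ (2 * a)) + (N : ℝ) ^ (1 + 2 * a) :=
    (norm_zetaTrunc_le ha hN hs).trans (by gcongr)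
  have htail : ‖∑' k, zetaStep (N + k) s‖ ≤ 3 * N * (2 * N) * (K * (N : ℝ) ^ (2 * a - 1)) :=
    (norm_tsum_zetaStep_le ha ha' hN hs).trans (by gcongr)
  have hpow : (N : ℝ) ^ (1 + 2 * a) = N * (N : ℝ) ^ (2 * a) := by
    rw [Real.rpow_add hN0, Real.rpow_one]
  have hpow' : (N : ℝ) ^ (2 * a) = N * (N : ℝ) ^ (2 * a - 1) := by
    rw [Real.rpow_sub_one hN0.ne', mul_div_cancel₀ _ hN0.ne']
  calc ‖riemannZeta₁ s‖ ≤ ‖zetaTrunc N s‖ + ‖∑' k, zetaStep (N + k) s‖ := by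
        rw [riemannZeta₁_eq_zetaTrunc_add_tsum hN (by linarith)]
        exact norm_add_le _ _
    _ ≤ _ := add_le_add htrunc htail
    _ = (8 * K + 1) * (N : ℝ) ^ (1 + 2 * a) := by
        rw [hpow, hpow']
        ring
    _ ≤ (8 * K + 1) * (4 * height s ^ (1 + 2 * a)) := by
        gcongr
        exact rpow_le_four_mul_rpow ha ha' (height_pos s).le hN0.le hNT
    _ = _ := (mul_assoc _ _ _).symm

lemma exists_norm_riemannZeta₁_le_on_closedBall (ha : 0 < a) (ha' : a ≤ 1 / 2) :
    ∃ C > 0, ∀ s : ℂ, 1 ≤ s.re → s.re ≤ 2 → ∀ z ∈ Metric.closedBall s a,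
      ‖riemannZeta₁ z‖ ≤ C * height s ^ (1 + 2 * a) := by
  obtain ⟨C, hC, hbound⟩ := exists_norm_riemannZeta₁_le ha ha'
  refine ⟨C * 4, by positivity, fun s hs1 hs2 z hz ↦ ?_⟩
  rw [mem_closedBall_iff_norm] at hz
  have hre := abs_le.mp ((Complex.abs_re_le_norm (z - s)).trans hz)
  rw [Complex.sub_re] at hre
  have hheight : height z ≤ 2 * height s := by
    linarith [height_le_add_dist s z, one_le_height s]
  calc ‖riemannZeta₁ z‖ ≤ C * height z ^ (1 + 2 * a) := hbound z (by linarith) (by linarith)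
    _ ≤ C * (4 * height s ^ (1 + 2 * a)) := by
        gcongr
        exact rpow_le_four_mul_rpow ha ha' (height_pos s).le (height_pos z).le hheight
    _ = _ := (mul_assoc _ _ _).symm

lemma exists_norm_deriv_riemannZeta₁_le_on_closedBall (ha : 0 < a) (ha' : a ≤ 1 / 2) :
    ∃ D > 0, ∀ s : ℂ, 1 ≤ s.re → s.re ≤ 2 → ∀ z ∈ Metric.closedBall s (a / 2),
      ‖deriv riemannZeta₁ z‖ ≤ D * height s ^ (1 + 2 * a) := by
  obtain ⟨C, hC, hbound⟩ := exists_norm_riemannZeta₁_le_on_closedBall ha ha'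
  refine ⟨C / (a / 2), by positivity, fun s hs1 hs2 z hz ↦ ?_⟩
  have h := Complex.norm_deriv_le_of_forall_mem_sphere_norm_le (c := z) (half_pos ha)
    differentiable_riemannZeta₁.diffContOnCl fun w hw ↦
      hbound s hs1 hs2 w (Metric.mem_closedBall.mpr ?_)
  · exact h.trans_eq (by ring)
  · linarith [dist_triangle w z s, Metric.mem_sphere.mp hw, Metric.mem_closedBall.mp hz]

lemma closedBall_height_subset (ha : 0 ≤ a) {κ : ℝ} (hκ : 0 ≤ κ) (s : ℂ) :
    Metric.closedBall s (κ * height s ^ (-(10 * a))) ⊆ Metric.closedBall s κ :=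
  Metric.closedBall_subset_closedBall
    (mul_le_of_le_one_right hκ (height_rpow_neg_le_one s (by positivity)))

lemma exists_norm_riemannZeta₁_sub_le (ha : 0 < a) (ha' : a ≤ 1 / 2) :
    ∃ D > 0, ∀ κ, 0 ≤ κ → κ ≤ a / 2 → ∀ s : ℂ, 1 ≤ s.re → s.re ≤ 2 →
      ∀ z ∈ Metric.closedBall s (κ * height s ^ (-(10 * a))),
        ‖riemannZeta₁ z - riemannZeta₁ s‖ ≤ D * κ * height s ^ (1 - 8 * a) := by
  obtain ⟨D, hD, hbound⟩ := exists_norm_deriv_riemannZeta₁_le_on_closedBall ha ha'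
  refine ⟨D, hD, fun κ hκ hκa s hs1 hs2 z hz ↦ ?_⟩
  have hT0 := height_pos s
  have hz' : z ∈ Metric.closedBall s (a / 2) :=
    Metric.closedBall_subset_closedBall hκa (closedBall_height_subset ha.le hκ s hz)
  calc ‖riemannZeta₁ z - riemannZeta₁ s‖ ≤ D * height s ^ (1 + 2 * a) * ‖z - s‖ :=
        (convex_closedBall s (a / 2)).norm_image_sub_le_of_norm_deriv_le
          (fun w _ ↦ differentiable_riemannZeta₁ w) (hbound s hs1 hs2)
          (Metric.mem_closedBall_self (by positivity)) hz'
    _ ≤ D * height s ^ (1 + 2 * a) * (κ * height s ^ (-(10 * a))) := by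
        gcongr
        exact mem_closedBall_iff_norm.mp hz
    _ = D * κ * height s ^ (1 - 8 * a) := by
        rw [show 1 - 8 * a = 1 + 2 * a + -(10 * a) by ring, Real.rpow_add hT0 (1 + 2 * a)]
        ring

lemma riemannZeta₁_ne_zero {s : ℂ} (hs : 1 ≤ s.re) : riemannZeta₁ s ≠ 0 := by
  by_cases h : s = 1
  · simp [h]
  · rw [riemannZeta₁_of_ne_one h]
    exact mul_ne_zero (sub_ne_zero.mpr h) (riemannZeta_ne_zero_of_one_le_re hs)

lemma le_norm_riemannZeta₁_product {x : ℝ} (hx : 0 < x) (y : ℝ) :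
    x ^ 3 * ‖(x + Complex.I * y : ℂ)‖ ^ 4 * ‖(x + 2 * Complex.I * y : ℂ)‖ ≤
      ‖riemannZeta₁ (1 + x)‖ ^ 3 * ‖riemannZeta₁ (1 + x + Complex.I * y)‖ ^ 4 *
        ‖riemannZeta₁ (1 + x + 2 * Complex.I * y)‖ := by
  have hfactor (w : ℂ) (hw : 0 < w.re) :
      ‖riemannZeta₁ (1 + w)‖ = ‖w‖ * ‖riemannZeta (1 + w)‖ := by
    have hw0 : w ≠ 0 := by rintro rfl; simp at hw
    rw [riemannZeta₁_of_ne_one (by simpa using hw0), add_sub_cancel_left, norm_mul]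
  have hzeta : 1 ≤ ‖riemannZeta (1 + x)‖ ^ 3 * ‖riemannZeta (1 + x + Complex.I * y)‖ ^ 4 *
      ‖riemannZeta (1 + x + 2 * Complex.I * y)‖ := by
    simpa [DirichletCharacter.LFunctionTrivChar, DirichletCharacter.LFunction_modOne_eq] using
      DirichletCharacter.norm_LFunction_product_ge_one (N := 1) 1 hx y
  simp only [add_assoc] at hzeta ⊢
  rw [hfactor _ (by simpa), hfactor _ (by simpa), hfactor _ (by simpa), Complex.norm_real,
    Real.norm_of_nonneg hx.le]
  refine (le_mul_of_one_le_right (by positivity) hzeta).trans_eq ?_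
  ring

lemma pow_mul_pow_le_norm_riemannZeta₁_product {x y : ℝ} (hx : 0 < x) (hy : 1 ≤ |y|) :
    x ^ 3 * (1 + |y|) ^ 5 ≤ 16 * (‖riemannZeta₁ (1 + x)‖ ^ 3 *
      ‖riemannZeta₁ (1 + x + Complex.I * y)‖ ^ 4 *
        ‖riemannZeta₁ (1 + x + 2 * Complex.I * y)‖) := by
  have hnorm : |y| ≤ ‖(x + Complex.I * y : ℂ)‖ := by
    simpa using Complex.abs_im_le_norm (x + Complex.I * y)
  have hnorm' : 2 * |y| ≤ ‖(x + 2 * Complex.I * y : ℂ)‖ := by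
    simpa [abs_mul] using Complex.abs_im_le_norm (x + 2 * Complex.I * y)
  calc x ^ 3 * (1 + |y|) ^ 5 = 16 * (x ^ 3 * ((1 + |y|) / 2) ^ 4 * (1 + |y|)) := by ring
    _ ≤ 16 * (x ^ 3 * ‖(x + Complex.I * y : ℂ)‖ ^ 4 * ‖(x + 2 * Complex.I * y : ℂ)‖) := by
        gcongr <;> linarith
    _ ≤ _ := by
        gcongr 16 * ?_
        exact le_norm_riemannZeta₁_product hx y

lemma exists_le_norm_riemannZeta₁_pow_four (ha : 0 < a) (ha' : a ≤ 1 / 2) :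
    ∃ c > 0, ∀ x y : ℝ, 0 < x → x ≤ 2 → 1 ≤ |y| →
      c * x ^ 3 * (1 + |y|) ^ (4 - 2 * a) ≤ ‖riemannZeta₁ (1 + x + Complex.I * y)‖ ^ 4 := by
  obtain ⟨C, hC, hbound⟩ := exists_norm_riemannZeta₁_le ha ha'
  refine ⟨1 / (64 * C ^ 4), by positivity, fun x y hx hx2 hy ↦ ?_⟩
  set T := 1 + |y|
  have hT0 : 0 < T := by positivity
  have hreal : ‖riemannZeta₁ (1 + x)‖ ≤ C := by
    have hre : (1 + x : ℂ).re = 1 + x := by simp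
    simpa [height] using hbound (1 + x) (by linarith) (by linarith)
  have hdouble : ‖riemannZeta₁ (1 + x + 2 * Complex.I * y)‖ ≤ C * (4 * T ^ (1 + 2 * a)) := by
    have hre : (1 + x + 2 * Complex.I * y : ℂ).re = 1 + x := by simp
    have him : (1 + x + 2 * Complex.I * y : ℂ).im = 2 * y := by simp
    refine (hbound _ (by linarith) (by linarith)).trans ?_
    gcongr
    refine rpow_le_four_mul_rpow ha ha' hT0.le (height_pos _).le ?_
    rw [height, him, abs_mul, abs_two]
    linarith
  have hpow : T ^ 5 = T ^ (4 - 2 * a) * T ^ (1 + 2 * a) := by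
    rw [← Real.rpow_add hT0, ← Real.rpow_natCast]
    ring_nf
  refine le_of_mul_le_mul_right ?_ (show 0 < 64 * C ^ 4 * T ^ (1 + 2 * a) by positivity)
  calc _ = x ^ 3 * T ^ 5 := by
        rw [hpow]
        field_simp
    _ ≤ _ := pow_mul_pow_le_norm_riemannZeta₁_product hx hy
    _ ≤ 16 * (C ^ 3 * ‖riemannZeta₁ (1 + x + Complex.I * y)‖ ^ 4 *
        (C * (4 * T ^ (1 + 2 * a)))) := by gcongr
    _ = _ := by ring

-- Moving right by `κ (height s) ^ (-10 a)` changes `riemannZeta₁` by at most half of what the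
-- 3-4-1 inequality provides there.
lemma exists_le_norm_riemannZeta₁_of_one_le_abs_im (ha : 0 < a) (ha' : a ≤ 1 / 2) :
    ∃ c > 0, ∀ s : ℂ, 1 ≤ s.re → s.re ≤ 2 → 1 ≤ |s.im| →
      c * height s ^ (1 - 8 * a) ≤ ‖riemannZeta₁ s‖ := by
  obtain ⟨c, hc, hlower⟩ := exists_le_norm_riemannZeta₁_pow_four ha ha'
  obtain ⟨D, hD, hlip⟩ := exists_norm_riemannZeta₁_sub_le ha ha'
  obtain ⟨κ, hκ, hκa, hκD⟩ : ∃ κ > 0, κ ≤ a / 2 ∧ κ * (2 * D) ^ 4 ≤ c :=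
    ⟨min (a / 2) (c / (2 * D) ^ 4), by positivity, min_le_left _ _,
      (le_div_iff₀ (by positivity)).mp (min_le_right _ _)⟩
  refine ⟨D * κ, by positivity, fun s hs1 hs2 hsim ↦ ?_⟩
  set T := height s
  have hT0 : 0 < T := height_pos s
  set δ := κ * T ^ (-(10 * a)) with hδ
  have hδ0 : 0 < δ := by positivity
  have hδκ : δ ≤ κ :=
    mul_le_of_le_one_right hκ.le (height_rpow_neg_le_one s (by positivity))
  have hshift : (2 * (D * κ * T ^ (1 - 8 * a))) ^ 4 ≤ ‖riemannZeta₁ (s + δ)‖ ^ 4 := by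
    have hs : s + δ = 1 + (s.re - 1 + δ : ℝ) + Complex.I * s.im := by
      push_cast
      linear_combination -Complex.re_add_im s
    have hpow : (T ^ (1 - 8 * a)) ^ 4 = (T ^ (-(10 * a))) ^ 3 * T ^ (4 - 2 * a) := by
      rw [← Real.rpow_mul_natCast hT0.le, ← Real.rpow_mul_natCast hT0.le, ← Real.rpow_add hT0]
      push_cast
      ring_nf
    calc (2 * (D * κ * T ^ (1 - 8 * a))) ^ 4
        = κ * (2 * D) ^ 4 * δ ^ 3 * T ^ (4 - 2 * a) := by
          rw [mul_pow, mul_pow, hpow, hδ]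
          ring
      _ ≤ c * (s.re - 1 + δ) ^ 3 * T ^ (4 - 2 * a) := by
          gcongr
          linarith
      _ ≤ _ := hs ▸ hlower _ _ (by linarith) (by linarith) hsim
  have hmove : ‖riemannZeta₁ (s + δ) - riemannZeta₁ s‖ ≤ D * κ * T ^ (1 - 8 * a) := by
    refine hlip κ hκ.le hκa s hs1 hs2 _ (mem_closedBall_iff_norm.mpr ?_)
    simpa [abs_of_pos hδ0] using hδ.le
  have := le_of_pow_le_pow_left₀ four_ne_zero (norm_nonneg _) hshift
  linarith [norm_sub_norm_le (riemannZeta₁ (s + δ)) (riemannZeta₁ s)]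

lemma exists_le_norm_riemannZeta₁_of_abs_im_le_one :
    ∃ c > 0, ∀ s : ℂ, 1 ≤ s.re → s.re ≤ 2 → |s.im| ≤ 1 → c ≤ ‖riemannZeta₁ s‖ := by
  have hcompact : IsCompact (Set.Icc (1 : ℝ) 2 ×ℂ Set.Icc (-1 : ℝ) 1) :=
    isCompact_Icc.reProdIm isCompact_Icc
  obtain ⟨w, hw, hmin⟩ := hcompact.exists_isMinOn
    ⟨1, by simp [Complex.mem_reProdIm]⟩ differentiable_riemannZeta₁.continuous.norm.continuousOn
  refine ⟨‖riemannZeta₁ w‖, norm_pos_iff.mpr (riemannZeta₁_ne_zero hw.1.1),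
    fun s hs1 hs2 hsim ↦ ?_⟩
  exact hmin (Complex.mem_reProdIm.mpr ⟨⟨hs1, hs2⟩, abs_le.mp hsim⟩)

theorem exists_le_norm_riemannZeta₁ (ha : 0 < a) (ha' : a ≤ 1 / 8) :
    ∃ c > 0, ∀ s : ℂ, 1 ≤ s.re → s.re ≤ 2 → c * height s ^ (1 - 8 * a) ≤ ‖riemannZeta₁ s‖ := by
  obtain ⟨c, hc, hfar⟩ := exists_le_norm_riemannZeta₁_of_one_le_abs_im ha (by linarith)
  obtain ⟨m, hm, hnear⟩ := exists_le_norm_riemannZeta₁_of_abs_im_le_one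
  refine ⟨min c (m / 2), by positivity, fun s hs1 hs2 ↦ ?_⟩
  rcases le_total 1 |s.im| with hsim | hsim
  · refine le_trans ?_ (hfar s hs1 hs2 hsim)
    have := height_pos s
    gcongr
    exact min_le_left _ _
  · have hT : height s ^ (1 - 8 * a) ≤ 2 :=
      calc height s ^ (1 - 8 * a) ≤ height s ^ (1 : ℝ) :=
            Real.rpow_le_rpow_of_exponent_le (one_le_height s) (by linarith)
        _ ≤ 2 := by
            rw [Real.rpow_one, height]
            linarith
    calc min c (m / 2) * height s ^ (1 - 8 * a) ≤ m / 2 * 2 := by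
          have := height_pos s
          gcongr
          exact min_le_right c (m / 2)
      _ = m := by ring
      _ ≤ _ := hnear s hs1 hs2 hsim

lemma exists_norm_logDeriv_riemannZeta₁_le (ha : 0 < a) (ha' : a ≤ 1 / 8) :
    ∃ C > 0, ∃ κ > 0, κ ≤ 1 / 4 ∧ ∀ s : ℂ, 1 ≤ s.re → s.re ≤ 2 →
      ∀ z ∈ Metric.closedBall s (κ * height s ^ (-(10 * a))),
        riemannZeta₁ z ≠ 0 ∧ ‖logDeriv riemannZeta₁ z‖ ≤ C * height s ^ (10 * a) := by
  obtain ⟨c, hc, hlower⟩ := exists_le_norm_riemannZeta₁ ha ha'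
  obtain ⟨D, hD, hlip⟩ := exists_norm_riemannZeta₁_sub_le ha (by linarith)
  obtain ⟨E, hE, hderiv⟩ := exists_norm_deriv_riemannZeta₁_le_on_closedBall ha (by linarith)
  obtain ⟨κ, hκ, hκa, hκD⟩ : ∃ κ > 0, κ ≤ a / 2 ∧ κ * (2 * D) ≤ c :=
    ⟨min (a / 2) (c / (2 * D)), by positivity, min_le_left _ _,
      (le_div_iff₀ (by positivity)).mp (min_le_right _ _)⟩
  refine ⟨E / (c / 2), by positivity, κ, hκ, by linarith, fun s hs1 hs2 z hz ↦ ?_⟩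
  set T := height s
  have hT0 : 0 < T := height_pos s
  have hsplit : T ^ (1 + 2 * a) = T ^ (1 - 8 * a) * T ^ (10 * a) := by
    rw [← Real.rpow_add hT0]
    ring_nf
  have hz' : z ∈ Metric.closedBall s (a / 2) :=
    Metric.closedBall_subset_closedBall hκa (closedBall_height_subset ha.le hκ.le s hz)
  have hmove : ‖riemannZeta₁ z - riemannZeta₁ s‖ ≤ c / 2 * T ^ (1 - 8 * a) := by
    refine (hlip κ hκ.le hκa s hs1 hs2 z hz).trans ?_
    gcongr
    linarith
  have hz_lower : c / 2 * T ^ (1 - 8 * a) ≤ ‖riemannZeta₁ z‖ := by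
    linarith [hlower s hs1 hs2, norm_sub_norm_le (riemannZeta₁ s) (riemannZeta₁ z),
      norm_sub_rev (riemannZeta₁ s) (riemannZeta₁ z)]
  have hz_pos : 0 < ‖riemannZeta₁ z‖ := lt_of_lt_of_le (by positivity) hz_lower
  refine ⟨norm_pos_iff.mp hz_pos, ?_⟩
  calc ‖logDeriv riemannZeta₁ z‖ = ‖deriv riemannZeta₁ z‖ / ‖riemannZeta₁ z‖ := by
        rw [logDeriv_apply, norm_div]
    _ ≤ E * T ^ (1 + 2 * a) / (c / 2 * T ^ (1 - 8 * a)) := by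
        gcongr
        exact hderiv s hs1 hs2 z hz'
    _ = _ := by
        rw [hsplit]
        field_simp

/-- The Laplace transform, up to sign, of `v ↦ ∫ u in 0..v, (ψ (exp u) - exp u)`; since
`riemannZeta₁ s = (s - 1) ζ(s)`, it is regular at `s = 1`. -/
noncomputable def zetaKernel (s : ℂ) : ℂ := (logDeriv riemannZeta₁ s + 1) / s ^ 2

lemma differentiableAt_zetaKernel {s : ℂ} (hs : s ≠ 0) (hζ : riemannZeta₁ s ≠ 0) :
    DifferentiableAt ℂ zetaKernel s := by
  have hlog : DifferentiableAt ℂ (logDeriv riemannZeta₁) s :=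
    (differentiable_riemannZeta₁.analyticAt s).deriv.differentiableAt.div
      (differentiable_riemannZeta₁ s) hζ
  exact (hlog.add_const 1).div (by fun_prop) (pow_ne_zero 2 hs)

lemma exists_norm_zetaKernel_le_on_closedBall (ha : 0 < a) (ha' : a ≤ 1 / 8) :
    ∃ C > 0, ∃ κ > 0, κ ≤ 1 / 4 ∧ ∀ s : ℂ, 1 ≤ s.re → s.re ≤ 2 →
      ∀ z ∈ Metric.closedBall s (κ * height s ^ (-(10 * a))),
        DifferentiableAt ℂ zetaKernel z ∧ ‖zetaKernel z‖ ≤ C * height s ^ (10 * a - 2) := by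
  obtain ⟨C, hC, κ, hκ, hκ', hlog⟩ := exists_norm_logDeriv_riemannZeta₁_le ha ha'
  refine ⟨16 * (C + 1), by positivity, κ, hκ, hκ', fun s hs1 hs2 z hz ↦ ?_⟩
  obtain ⟨hζ, hbound⟩ := hlog s hs1 hs2 z hz
  set T := height s
  have hT0 : 0 < T := height_pos s
  have hz' : ‖z - s‖ ≤ 1 / 4 := (mem_closedBall_iff_norm.mp
    (closedBall_height_subset (by positivity) hκ.le s hz)).trans hκ'
  have hz_norm : T / 4 ≤ ‖z‖ := by
    linarith [height_le_two_mul_norm hs1, norm_sub_norm_le s z, norm_sub_rev s z, one_le_height s]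
  have hone : 1 ≤ T ^ (10 * a) := Real.one_le_rpow (one_le_height s) (by positivity)
  have hz0 : z ≠ 0 := norm_pos_iff.mp (lt_of_lt_of_le (by positivity) hz_norm)
  refine ⟨differentiableAt_zetaKernel hz0 hζ, ?_⟩
  calc ‖zetaKernel z‖ = ‖logDeriv riemannZeta₁ z + 1‖ / ‖z‖ ^ 2 := by
        rw [zetaKernel, norm_div, norm_pow]
    _ ≤ (C * T ^ (10 * a) + T ^ (10 * a)) / (T / 4) ^ 2 := by
        gcongr
        exact (norm_add_le _ _).trans (by rw [norm_one]; gcongr)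
    _ = 16 * (C + 1) * T ^ (10 * a - 2) := by
        rw [Real.rpow_sub hT0, Real.rpow_two]
        field_simp
        norm_num

theorem exists_norm_iteratedDeriv_zetaKernel_le (k : ℕ) :
    ∃ C, ∀ j ≤ k, ∀ s : ℂ, 1 ≤ s.re → s.re ≤ 2 →
      ‖iteratedDeriv j zetaKernel s‖ ≤ C * height s ^ (-(3 / 2) : ℝ) := by
  set a : ℝ := 1 / (20 * (k + 1)) with ha_def
  have ha : 0 < a := by positivity
  have hak : 10 * a * (k + 1) = 1 / 2 := by
    rw [ha_def]
    field_simp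
    norm_num
  have ha' : a ≤ 1 / 8 := by nlinarith [k.cast_nonneg (α := ℝ)]
  obtain ⟨C, hC, κ, hκ, hκ', hdisc⟩ := exists_norm_zetaKernel_le_on_closedBall ha ha'
  refine ⟨k.factorial * C / κ ^ k, fun j hj s hs1 hs2 ↦ ?_⟩
  have hT := one_le_height s
  set T := height s
  have hT0 : 0 < T := height_pos s
  have hdiff : DiffContOnCl ℂ zetaKernel (Metric.ball s (κ * T ^ (-(10 * a)))) :=
    DifferentiableOn.diffContOnCl_ball (U := Metric.closedBall s (κ * T ^ (-(10 * a))))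
      (fun z hz ↦ (hdisc s hs1 hs2 z hz).1.differentiableWithinAt) subset_rfl
  calc ‖iteratedDeriv j zetaKernel s‖
      ≤ j.factorial * (C * T ^ (10 * a - 2)) / (κ * T ^ (-(10 * a))) ^ j :=
        Complex.norm_iteratedDeriv_le_of_forall_mem_sphere_norm_le j (by positivity) hdiff
          fun z hz ↦ (hdisc s hs1 hs2 z (Metric.sphere_subset_closedBall hz)).2
    _ = j.factorial * C / κ ^ j * T ^ (10 * a - 2 + 10 * a * j) := by
        rw [Real.rpow_add hT0, mul_pow, ← Real.rpow_mul_natCast hT0.le, neg_mul,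
          Real.rpow_neg hT0.le]
        field_simp
    _ ≤ k.factorial * C / κ ^ k * T ^ (-(3 / 2) : ℝ) := by
        have hκ1 : κ ≤ 1 := by linarith
        have hjk : 10 * a * j ≤ 10 * a * k := by gcongr
        gcongr ?_ * C / ?_ * ?_
        · exact_mod_cast Nat.factorial_le hj
        · exact pow_le_pow_of_le_one hκ.le hκ1 hj
        · exact Real.rpow_le_rpow_of_exponent_le hT (by linarith)

end Growth

section Laplace

open MeasureTheory FourierTransform

lemma contDiff_comp_line {F : ℂ → ℂ} {p q : ℂ} (hF : ∀ w : ℝ, AnalyticAt ℂ F (p + w * q))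
    (n : ℕ) : ContDiff ℝ n fun w : ℝ ↦ F (p + w * q) := by
  have hline : ContDiff ℝ n fun w : ℝ ↦ p + w * q :=
    contDiff_const.add (Complex.ofRealCLM.contDiff.mul contDiff_const)
  exact contDiff_iff_contDiffAt.mpr fun w ↦
    ((hF w).contDiffAt.restrict_scalars ℝ).comp w hline.contDiffAt

lemma iteratedDeriv_comp_line {F : ℂ → ℂ} {p q : ℂ}
    (hF : ∀ w : ℝ, AnalyticAt ℂ F (p + w * q)) (n : ℕ) :
    iteratedDeriv n (fun w : ℝ ↦ F (p + w * q)) =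
      fun w : ℝ ↦ q ^ n * iteratedDeriv n F (p + w * q) := by
  induction n with
  | zero => simp
  | succ n ih =>
    ext w
    have hline : HasDerivAt (fun z : ℂ ↦ p + z * q) q w := by
      simpa using ((hasDerivAt_id (w : ℂ)).mul_const q).const_add p
    have hderiv : HasDerivAt (iteratedDeriv n F) (iteratedDeriv (n + 1) F (p + w * q))
        (p + w * q) := by
      rw [iteratedDeriv_succ, iteratedDeriv_eq_iterate]
      exact ((hF w).iterated_deriv n).differentiableAt.hasDerivAt
    rw [iteratedDeriv_succ, ih]
    refine (((hderiv.comp (w : ℂ) hline).comp_ofReal).const_mul (q ^ n)).deriv.trans ?_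
    ring

lemma norm_pow_mul_norm_le_integral_iteratedDeriv_fourier {f : ℝ → ℂ} {n : ℕ} {v : ℝ}
    (hf : Integrable f) (hfv : ContinuousAt f v) (hdiff : ContDiff ℝ n (𝓕 f))
    (hint : ∀ m ≤ n, Integrable (iteratedDeriv m (𝓕 f))) :
    (2 * π * |v|) ^ n * ‖f v‖ ≤ ∫ w, ‖iteratedDeriv n (𝓕 f) w‖ := by
  have hinv : f v = 𝓕 (𝓕 f) (-v) := by
    rw [← Real.fourierInv_eq_fourier_neg, hf.fourierInv_fourier_eq ?_ hfv]
    simpa using hint 0 n.zero_le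
  have hder : 𝓕 (iteratedDeriv n (𝓕 f)) (-v) =
      (2 * π * Complex.I * (-v : ℝ)) ^ n • 𝓕 (𝓕 f) (-v) := by
    rw [Real.fourier_iteratedDeriv (N := n) hdiff (fun m hm ↦ hint m (by exact_mod_cast hm)) le_rfl]
  calc (2 * π * |v|) ^ n * ‖f v‖ = ‖𝓕 (iteratedDeriv n (𝓕 f)) (-v)‖ := by
        rw [hder, ← hinv, norm_smul, norm_pow]
        simp [abs_of_pos pi_pos]
    _ ≤ _ := VectorFourier.norm_fourierIntegral_le_integral_norm _ _ _ _ _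

variable {R : ℝ → ℂ} {F : ℂ → ℂ} {b : ℝ → ℝ}

lemma fourier_indicator_exp (R : ℝ → ℂ) (σ w : ℝ) :
    𝓕 ((Set.Ioi 0).indicator fun v : ℝ ↦ R v * Complex.exp (-(σ * v))) w =
      ∫ v in Set.Ioi (0 : ℝ), R v * Complex.exp (-((σ + w * (2 * π * Complex.I)) * v)) := by
  rw [Real.fourier_eq', ← integral_indicator measurableSet_Ioi]
  congr 1 with v
  by_cases hv : v ∈ Set.Ioi (0 : ℝ)
  · simp only [Set.indicator_of_mem hv, smul_eq_mul, RCLike.inner_apply, conj_trivial]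
    rw [mul_left_comm, ← Complex.exp_add]
    push_cast
    ring_nf
  · simp [Set.indicator_of_notMem hv]

lemma integrable_iteratedDeriv_comp_vertical {σ : ℝ} {j : ℕ}
    (hF : ∀ s : ℂ, s.re = σ → AnalyticAt ℂ F s) (hb : Integrable b)
    (hFb : ∀ s : ℂ, s.re = σ → ‖iteratedDeriv j F s‖ ≤ b s.im) :
    Integrable (iteratedDeriv j fun w : ℝ ↦ F (σ + w * (2 * π * Complex.I))) ∧
      ∫ w, ‖iteratedDeriv j (fun w : ℝ ↦ F (σ + w * (2 * π * Complex.I))) w‖ ≤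
        (2 * π) ^ j * ((2 * π)⁻¹ * ∫ y, b y) := by
  have hre (w : ℝ) : (σ + w * (2 * π * Complex.I) : ℂ).re = σ := by simp
  have him (w : ℝ) : (σ + w * (2 * π * Complex.I) : ℂ).im = 2 * π * w := by simp [mul_comm]
  have hline (w : ℝ) : AnalyticAt ℂ F (σ + w * (2 * π * Complex.I)) := hF _ (hre w)
  have hbound (w : ℝ) : ‖iteratedDeriv j (fun w : ℝ ↦ F (σ + w * (2 * π * Complex.I))) w‖ ≤
      (2 * π) ^ j * b (2 * π * w) := by
    rw [iteratedDeriv_comp_line hline, norm_mul, norm_pow]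
    gcongr
    · simp [abs_of_pos pi_pos]
    · exact him w ▸ hFb _ (hre w)
  have hb' : Integrable fun w ↦ (2 * π) ^ j * b (2 * π * w) :=
    (hb.comp_mul_left' (by positivity)).const_mul _
  refine ⟨hb'.mono' ((contDiff_comp_line hline j).continuous_iteratedDeriv j
    le_rfl).aestronglyMeasurable (ae_of_all _ hbound), ?_⟩
  calc _ ≤ ∫ w, (2 * π) ^ j * b (2 * π * w) :=
        integral_mono_of_nonneg (ae_of_all _ fun _ ↦ norm_nonneg _) hb' (ae_of_all _ hbound)
    _ = _ := by
        rw [integral_const_mul, Measure.integral_comp_mul_left, abs_of_pos (by positivity),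
          smul_eq_mul]

lemma pow_mul_norm_le_of_laplace_vertical {σ : ℝ} {k : ℕ} {v : ℝ} (hv : 0 < v)
    (hcont : ContinuousAt R v)
    (hint : IntegrableOn (fun v : ℝ ↦ R v * Complex.exp (-(σ * v))) (Set.Ioi 0))
    (hF : ∀ s : ℂ, s.re = σ → AnalyticAt ℂ F s)
    (hlap : ∀ s : ℂ, s.re = σ → ∫ v in Set.Ioi (0 : ℝ), R v * Complex.exp (-(s * v)) = F s)
    (hb : Integrable b) (hFb : ∀ j ≤ k, ∀ s : ℂ, s.re = σ → ‖iteratedDeriv j F s‖ ≤ b s.im) :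
    v ^ k * ‖R v‖ ≤ (2 * π)⁻¹ * (∫ y, b y) * exp (σ * v) := by
  set f : ℝ → ℂ := (Set.Ioi 0).indicator fun v : ℝ ↦ R v * Complex.exp (-(σ * v)) with hf
  have hre (w : ℝ) : (σ + w * (2 * π * Complex.I) : ℂ).re = σ := by simp
  have hfourier : 𝓕 f = fun w : ℝ ↦ F (σ + w * (2 * π * Complex.I)) :=
    funext fun w ↦ (fourier_indicator_exp R σ w).trans (hlap _ (hre w))
  have hdiff : ContDiff ℝ k (𝓕 f) := hfourier ▸ contDiff_comp_line (fun w ↦ hF _ (hre w)) k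
  have hfint : Integrable f := (integrable_indicator_iff measurableSet_Ioi).mpr hint
  have hfcont : ContinuousAt f v :=
    (by fun_prop : ContinuousAt (fun v : ℝ ↦ R v * Complex.exp (-(σ * v))) v).congr
      (Set.eqOn_indicator.eventuallyEq_of_mem (Ioi_mem_nhds hv)).symm
  have hderiv (j : ℕ) (hj : j ≤ k) := integrable_iteratedDeriv_comp_vertical hF hb (hFb j hj)
  rw [← hfourier] at hderiv
  have key : (2 * π) ^ k * (v ^ k * ‖f v‖) ≤ (2 * π) ^ k * ((2 * π)⁻¹ * ∫ y, b y) := by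
    rw [← mul_assoc, ← mul_pow]
    simpa only [abs_of_pos hv] using (norm_pow_mul_norm_le_integral_iteratedDeriv_fourier hfint
      hfcont hdiff fun j hj ↦ (hderiv j hj).1).trans (hderiv k le_rfl).2
  have hnorm : ‖f v‖ = ‖R v‖ * exp (-(σ * v)) := by
    rw [hf, Set.indicator_of_mem (Set.mem_Ioi.mpr hv), norm_mul, Complex.norm_exp]
    simp
  calc v ^ k * ‖R v‖ = v ^ k * ‖f v‖ * exp (σ * v) := by
        rw [hnorm, mul_assoc, mul_assoc, ← exp_add, neg_add_cancel, exp_zero, mul_one]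
    _ ≤ _ := mul_le_mul_of_nonneg_right (le_of_mul_le_mul_left key (by positivity)) (exp_pos _).le

theorem pow_mul_norm_le_of_laplace {c d : ℝ} {k : ℕ} {v : ℝ} (hcd : c < d) (hv : 0 < v)
    (hcont : ContinuousAt R v)
    (hint : ∀ σ, c < σ → IntegrableOn (fun v : ℝ ↦ R v * Complex.exp (-(σ * v))) (Set.Ioi 0))
    (hF : ∀ s : ℂ, c < s.re → AnalyticAt ℂ F s)
    (hlap : ∀ s : ℂ, c < s.re → ∫ v in Set.Ioi (0 : ℝ), R v * Complex.exp (-(s * v)) = F s)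
    (hb : Integrable b)
    (hFb : ∀ j ≤ k, ∀ s : ℂ, c < s.re → s.re < d → ‖iteratedDeriv j F s‖ ≤ b s.im) :
    v ^ k * ‖R v‖ ≤ (2 * π)⁻¹ * (∫ y, b y) * exp (c * v) := by
  have hlim : Tendsto (fun σ ↦ (2 * π)⁻¹ * (∫ y, b y) * exp (σ * v)) (nhdsWithin c (Set.Ioi c))
      (nhds ((2 * π)⁻¹ * (∫ y, b y) * exp (c * v))) :=
    Continuous.tendsto' (by fun_prop) _ _ rfl |>.mono_left nhdsWithin_le_nhds
  refine ge_of_tendsto hlim ?_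
  filter_upwards [Ioo_mem_nhdsGT hcd] with σ hσ
  exact pow_mul_norm_le_of_laplace_vertical hv hcont (hint σ hσ.1) (fun s hs ↦ hF s (hs ▸ hσ.1))
    (fun s hs ↦ hlap s (hs ▸ hσ.1)) hb fun j hj s hs ↦ hFb j hj s (hs ▸ hσ.1) (hs ▸ hσ.2)

end Laplace

section LaplaceTransform

open MeasureTheory

lemma integrableOn_cexp_neg_mul_Ioi {p : ℂ} (hp : 0 < p.re) :
    IntegrableOn (fun v : ℝ ↦ Complex.exp (-(p * v))) (Set.Ioi 0) := by
  simpa only [neg_mul] using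
    integrableOn_exp_mul_complex_Ioi (a := -p) (by simpa using hp) 0

lemma integral_cexp_neg_mul_Ioi {p : ℂ} (hp : 0 < p.re) :
    ∫ v in Set.Ioi (0 : ℝ), Complex.exp (-(p * v)) = p⁻¹ := by
  have h := integral_exp_mul_complex_Ioi (a := -p) (by simpa using hp) 0
  simpa [neg_mul] using h

lemma integral_mul_cexp_mul_cexp_sub (h : ℝ → ℂ) (p : ℂ) {v : ℝ} :
    ∫ u in (0 : ℝ)..v, ContinuousLinearMap.mul ℝ ℂ (h u * Complex.exp (-(p * u)))
        (Complex.exp (-(p * ↑(v - u)))) =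
      (∫ u in (0 : ℝ)..v, h u) * Complex.exp (-(p * v)) := by
  rw [← intervalIntegral.integral_mul_const]
  refine intervalIntegral.integral_congr fun u _ ↦ ?_
  rw [ContinuousLinearMap.mul_apply', mul_assoc, ← Complex.exp_add]
  congr 2
  push_cast
  ring

lemma integrableOn_primitive_mul_cexp {h : ℝ → ℂ} {p : ℂ} (hp : 0 < p.re)
    (hh : IntegrableOn (fun u : ℝ ↦ h u * Complex.exp (-(p * u))) (Set.Ioi 0)) :
    IntegrableOn (fun v : ℝ ↦ (∫ u in (0 : ℝ)..v, h u) * Complex.exp (-(p * v)))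
      (Set.Ioi 0) := by
  have hconv := integrable_posConvolution hh (integrableOn_cexp_neg_mul_Ioi hp)
    (ContinuousLinearMap.mul ℝ ℂ)
  simpa only [posConvolution, integral_mul_cexp_mul_cexp_sub] using
    (integrable_indicator_iff measurableSet_Ioi).mp hconv

lemma integral_primitive_mul_cexp {h : ℝ → ℂ} {p : ℂ} (hp : 0 < p.re)
    (hh : IntegrableOn (fun u : ℝ ↦ h u * Complex.exp (-(p * u))) (Set.Ioi 0)) :
    ∫ v in Set.Ioi (0 : ℝ), (∫ u in (0 : ℝ)..v, h u) * Complex.exp (-(p * v)) =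
      (∫ u in Set.Ioi (0 : ℝ), h u * Complex.exp (-(p * u))) / p := by
  have hconv := integral_posConvolution hh (integrableOn_cexp_neg_mul_Ioi hp)
    (ContinuousLinearMap.mul ℝ ℂ)
  simp only [integral_mul_cexp_mul_cexp_sub] at hconv
  rw [hconv, integral_cexp_neg_mul_Ioi hp, ContinuousLinearMap.mul_apply', div_eq_mul_inv]

end LaplaceTransform

section Chebyshev

open MeasureTheory Asymptotics
open scoped ArithmeticFunction.vonMangoldt

/-- The error term `ψ(e ^ u) - e ^ u` of the prime number theorem on the exponential scale. -/
noncomputable def psiExpError (u : ℝ) : ℝ := Chebyshev.psi (exp u) - exp u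

/-- The primitive of `psiExpError` vanishing at `0`: a continuous substitute for it whose Laplace
transform decays fast enough to be inverted on the line `re s = 1`. -/
noncomputable def psiExpErrorPrimitive (v : ℝ) : ℝ := ∫ u in (0 : ℝ)..v, psiExpError u

lemma abs_psi_exp_le (u : ℝ) : |Chebyshev.psi (exp u)| ≤ (log 4 + 4) * exp u := by
  rw [abs_of_nonneg (Chebyshev.psi_nonneg _)]
  exact Chebyshev.psi_le_const_mul_self (exp_pos u).le

lemma monotone_psi_exp : Monotone fun u ↦ Chebyshev.psi (exp u) :=
  Chebyshev.psi_mono.comp exp_monotone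

lemma intervalIntegrable_psi_exp (a b : ℝ) :
    IntervalIntegrable (fun u ↦ Chebyshev.psi (exp u)) volume a b :=
  monotone_psi_exp.intervalIntegrable

lemma intervalIntegrable_psiExpError (a b : ℝ) :
    IntervalIntegrable psiExpError volume a b :=
  (intervalIntegrable_psi_exp a b).sub (continuous_exp.intervalIntegrable a b)

lemma continuous_psiExpErrorPrimitive : Continuous psiExpErrorPrimitive :=
  intervalIntegral.continuous_primitive intervalIntegrable_psiExpError 0

lemma integrableOn_psi_exp_mul_cexp {s : ℂ} (hs : 1 < s.re) :
    IntegrableOn (fun u : ℝ ↦ (Chebyshev.psi (exp u) : ℂ) * Complex.exp (-(s * u)))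
      (Set.Ioi 0) := by
  have hdom := (integrableOn_cexp_neg_mul_Ioi (p := s - 1) (by simpa using hs)).norm.const_mul
    (log 4 + 4)
  refine hdom.mono' ?_ (ae_of_all _ fun u ↦ ?_)
  · exact (Complex.measurable_ofReal.comp monotone_psi_exp.measurable).aestronglyMeasurable.mul
      (by fun_prop)
  · calc ‖(Chebyshev.psi (exp u) : ℂ) * Complex.exp (-(s * u))‖
        = |Chebyshev.psi (exp u)| * ‖Complex.exp (-(s * u))‖ := by
          rw [norm_mul, Complex.norm_real, norm_eq_abs]
      _ ≤ (log 4 + 4) * exp u * ‖Complex.exp (-(s * u))‖ := by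
          gcongr
          exact abs_psi_exp_le u
      _ = (log 4 + 4) * ‖Complex.exp (-((s - 1) * u))‖ := by
          rw [mul_assoc, Complex.norm_exp, Complex.norm_exp, ← exp_add]
          congr 2
          simp only [Complex.neg_re, Complex.re_mul_ofReal, Complex.sub_re, Complex.one_re]
          ring

lemma integral_psi_exp_mul_cexp {s : ℂ} (hs : 1 < s.re) :
    ∫ u in Set.Ioi (0 : ℝ), (Chebyshev.psi (exp u) : ℂ) * Complex.exp (-(s * u)) =
      -logDeriv riemannZeta s / s := by
  have hs0 : s ≠ 0 := fun h ↦ by norm_num [h] at hs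
  have hsum (x : ℝ) : ∑ k ∈ Finset.Icc 1 ⌊x⌋₊, Λ k = Chebyshev.psi x := rfl
  have hO : (fun n : ℕ ↦ ∑ k ∈ Finset.Icc 1 n, Λ k) =O[atTop] fun n ↦ (n : ℝ) ^ (1 : ℝ) := by
    refine .of_bound (log 4 + 4) (.of_forall fun n ↦ ?_)
    have h := hsum n
    rw [Nat.floor_natCast] at h
    rw [h, rpow_one, norm_of_nonneg (Chebyshev.psi_nonneg _), norm_of_nonneg n.cast_nonneg]
    exact Chebyshev.psi_le_const_mul_self n.cast_nonneg
  have hL := LSeries_eq_mul_integral_of_nonneg (fun n ↦ Λ n) zero_le_one hs hO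
    fun n ↦ ArithmeticFunction.vonMangoldt_nonneg
  rw [ArithmeticFunction.LSeries_vonMangoldt_eq_deriv_riemannZeta_div hs, ← exp_zero,
    ← integral_comp_exp_Ioi] at hL
  rw [eq_div_iff hs0, logDeriv_apply, ← neg_div, hL, mul_comm]
  congr 1
  refine setIntegral_congr_fun measurableSet_Ioi fun u _ ↦ ?_
  rw [← Complex.ofReal_sum, hsum, Complex.real_smul,
    Complex.cpow_def_of_ne_zero (by exact_mod_cast (exp_pos u).ne'),
    ← Complex.ofReal_log (exp_pos u).le, log_exp, mul_left_comm, Complex.ofReal_exp,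
    ← Complex.exp_add]
  congr 2
  ring

lemma logDeriv_riemannZeta_eq {s : ℂ} (hs : 1 < s.re) :
    logDeriv riemannZeta s = logDeriv riemannZeta₁ s - (s - 1)⁻¹ := by
  have hs1 : s ≠ 1 := fun h ↦ by norm_num [h] at hs
  have hZ : riemannZeta₁ s ≠ 0 := riemannZeta₁_ne_zero hs.le
  have hs1' := sub_ne_zero.mpr hs1
  rw [logDeriv_apply, logDeriv_apply, deriv_riemannZeta_eq_neg_inv_sub_sq_mul_add hs1,
    riemannZeta_eq_inv_sub_mul hs1]
  field_simp
  ring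

lemma psiExpError_mul_cexp (s : ℂ) (u : ℝ) :
    (psiExpError u : ℂ) * Complex.exp (-(s * u)) =
      (Chebyshev.psi (exp u) : ℂ) * Complex.exp (-(s * u)) - Complex.exp (-((s - 1) * u)) := by
  rw [psiExpError, Complex.ofReal_sub, Complex.ofReal_exp, sub_mul, ← Complex.exp_add]
  congr 2
  ring

lemma integrableOn_psiExpError_mul_cexp {s : ℂ} (hs : 1 < s.re) :
    IntegrableOn (fun u : ℝ ↦ (psiExpError u : ℂ) * Complex.exp (-(s * u))) (Set.Ioi 0) :=
  ((integrableOn_psi_exp_mul_cexp hs).sub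
    (integrableOn_cexp_neg_mul_Ioi (p := s - 1) (by simpa using hs))).congr_fun
    (fun u _ ↦ (psiExpError_mul_cexp s u).symm) measurableSet_Ioi

lemma integral_psiExpError_mul_cexp {s : ℂ} (hs : 1 < s.re) :
    ∫ u in Set.Ioi (0 : ℝ), (psiExpError u : ℂ) * Complex.exp (-(s * u)) =
      -(logDeriv riemannZeta₁ s + 1) / s := by
  have hs0 : s ≠ 0 := fun h ↦ by norm_num [h] at hs
  have hs1 : s - 1 ≠ 0 := fun h ↦ by norm_num [sub_eq_zero.mp h] at hs
  have hs' : 0 < (s - 1).re := by simpa using hs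
  simp only [psiExpError_mul_cexp]
  rw [integral_sub (integrableOn_psi_exp_mul_cexp hs) (integrableOn_cexp_neg_mul_Ioi hs'),
    integral_psi_exp_mul_cexp hs, integral_cexp_neg_mul_Ioi hs', logDeriv_riemannZeta_eq hs]
  field_simp
  ring

lemma ofReal_psiExpErrorPrimitive (v : ℝ) :
    (psiExpErrorPrimitive v : ℂ) = ∫ u in (0 : ℝ)..v, (psiExpError u : ℂ) :=
  intervalIntegral.integral_ofReal.symm

lemma integrableOn_psiExpErrorPrimitive_mul_cexp {s : ℂ} (hs : 1 < s.re) :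
    IntegrableOn (fun v : ℝ ↦ (psiExpErrorPrimitive v : ℂ) * Complex.exp (-(s * v)))
      (Set.Ioi 0) := by
  simpa only [ofReal_psiExpErrorPrimitive] using
    integrableOn_primitive_mul_cexp (by linarith) (integrableOn_psiExpError_mul_cexp hs)

lemma integral_psiExpErrorPrimitive_mul_cexp {s : ℂ} (hs : 1 < s.re) :
    ∫ v in Set.Ioi (0 : ℝ), (psiExpErrorPrimitive v : ℂ) * Complex.exp (-(s * v)) =
      -zetaKernel s := by
  simp only [ofReal_psiExpErrorPrimitive]
  rw [integral_primitive_mul_cexp (by linarith) (integrableOn_psiExpError_mul_cexp hs),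
    integral_psiExpError_mul_cexp hs, zetaKernel, div_div, ← sq, neg_div]

lemma analyticAt_zetaKernel {s : ℂ} (hs : 1 < s.re) : AnalyticAt ℂ zetaKernel s := by
  refine DifferentiableOn.analyticAt (s := {z : ℂ | 1 < z.re}) (fun z hz ↦ ?_)
    ((isOpen_lt continuous_const Complex.continuous_re).mem_nhds hs)
  have hz' : 1 < z.re := hz
  exact (differentiableAt_zetaKernel (fun h ↦ by norm_num [h] at hz')
    (riemannZeta₁_ne_zero hz'.le)).differentiableWithinAt

theorem exists_pow_mul_abs_psiExpErrorPrimitive_le (k : ℕ) :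
    ∃ C, ∀ v : ℝ, 0 < v → v ^ k * |psiExpErrorPrimitive v| ≤ C * exp v := by
  obtain ⟨C, hC⟩ := exists_norm_iteratedDeriv_zetaKernel_le k
  have hb : Integrable fun y : ℝ ↦ C * (1 + ‖y‖) ^ (-(3 / 2) : ℝ) :=
    (integrable_one_add_norm (by norm_num)).const_mul C
  refine ⟨(2 * π)⁻¹ * ∫ y : ℝ, C * (1 + ‖y‖) ^ (-(3 / 2) : ℝ), fun v hv ↦ ?_⟩
  have hlaplace := pow_mul_norm_le_of_laplace (R := fun v ↦ (psiExpErrorPrimitive v : ℂ))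
    (F := -zetaKernel) (k := k) one_lt_two hv
    (Complex.continuous_ofReal.comp continuous_psiExpErrorPrimitive).continuousAt
    (fun σ hσ ↦ integrableOn_psiExpErrorPrimitive_mul_cexp (s := σ) (by simpa using hσ))
    (fun s hs ↦ (analyticAt_zetaKernel hs).neg)
    (fun s hs ↦ integral_psiExpErrorPrimitive_mul_cexp hs) hb
    (fun j hj s hs hs' ↦ by
      rw [iteratedDeriv_neg, norm_neg]
      exact hC j hj s hs.le hs'.le)
  simpa only [Complex.norm_real, norm_eq_abs, one_mul] using hlaplace

lemma mul_le_intervalIntegral_of_monotone {f : ℝ → ℝ} (hf : Monotone f) (v h : ℝ) :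
    h * f v ≤ ∫ u in v..v + h, f u := by
  rcases le_total 0 h with hh | hh
  · calc h * f v = ∫ _ in v..v + h, f v := by simp
      _ ≤ ∫ u in v..v + h, f u :=
        intervalIntegral.integral_mono_on (by linarith) intervalIntegrable_const
          hf.intervalIntegrable fun u hu ↦ hf hu.1
  · rw [intervalIntegral.integral_symm]
    calc h * f v = -∫ _ in v + h..v, f v := by simp
      _ ≤ -∫ u in v + h..v, f u :=
        neg_le_neg <| intervalIntegral.integral_mono_on (by linarith) hf.intervalIntegrable
          intervalIntegrable_const fun u hu ↦ hf hu.2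

-- Taking `h` of either sign bounds `psiExpError v` on both sides.
lemma mul_psiExpError_le {h : ℝ} (hh : |h| ≤ 1) (v : ℝ) :
    h * psiExpError v ≤
      psiExpErrorPrimitive (v + h) - psiExpErrorPrimitive v + exp v * h ^ 2 := by
  have hprim : psiExpErrorPrimitive (v + h) - psiExpErrorPrimitive v =
      (∫ u in v..v + h, Chebyshev.psi (exp u)) - exp v * (exp h - 1) := by
    rw [psiExpErrorPrimitive, psiExpErrorPrimitive, intervalIntegral.integral_interval_sub_left
      (intervalIntegrable_psiExpError _ _) (intervalIntegrable_psiExpError _ _)]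
    simp only [psiExpError]
    rw [intervalIntegral.integral_sub (intervalIntegrable_psi_exp _ _)
      (continuous_exp.intervalIntegrable _ _), integral_exp, exp_add]
    ring
  have hmono := mul_le_intervalIntegral_of_monotone monotone_psi_exp v h
  have hexp : exp v * (exp h - 1 - h) ≤ exp v * h ^ 2 := by
    gcongr
    exact (le_abs_self _).trans (abs_exp_sub_one_sub_id_le hh)
  rw [hprim, psiExpError]
  linarith

lemma exists_pow_mul_abs_psiExpErrorPrimitive_add_le (k : ℕ) :
    ∃ C, ∀ v h : ℝ, 2 ≤ v → |h| ≤ 1 → v ^ k * |psiExpErrorPrimitive (v + h)| ≤ C * exp v := by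
  obtain ⟨C, hC⟩ := exists_pow_mul_abs_psiExpErrorPrimitive_le k
  refine ⟨2 ^ k * (|C| * exp 1), fun v h hv hh ↦ ?_⟩
  obtain ⟨hh1, hh2⟩ := abs_le.mp hh
  calc v ^ k * |psiExpErrorPrimitive (v + h)|
      ≤ (2 * (v + h)) ^ k * |psiExpErrorPrimitive (v + h)| := by
        have hle : v ≤ 2 * (v + h) := by linarith
        gcongr
    _ = 2 ^ k * ((v + h) ^ k * |psiExpErrorPrimitive (v + h)|) := by rw [mul_pow, mul_assoc]
    _ ≤ 2 ^ k * (C * exp (v + h)) :=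
        mul_le_mul_of_nonneg_left (hC (v + h) (by linarith)) (by positivity)
    _ ≤ 2 ^ k * (|C| * exp (1 + v)) := by
        gcongr 2 ^ k * (?_ * exp ?_)
        exacts [le_abs_self C, by linarith]
    _ = 2 ^ k * (|C| * exp 1) * exp v := by rw [exp_add]; ring

theorem exists_pow_mul_abs_psiExpError_le (k : ℕ) :
    ∃ C, ∀ v : ℝ, 2 ≤ v → v ^ k * |psiExpError v| ≤ C * exp v := by
  obtain ⟨C, hC⟩ := exists_pow_mul_abs_psiExpErrorPrimitive_add_le (2 * k)
  refine ⟨2 * C + 1, fun v hv ↦ ?_⟩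
  set δ := (v ^ k)⁻¹ with hδ
  have hδ0 : 0 < δ := by positivity
  have hδ1 : δ ≤ 1 := inv_le_one_of_one_le₀ (one_le_pow₀ (by linarith))
  have hprim {h : ℝ} (hh : |h| ≤ 1) : |psiExpErrorPrimitive (v + h)| ≤ C * exp v * δ ^ 2 := by
    rw [hδ, inv_pow, ← pow_mul, mul_comm k, ← div_eq_mul_inv, le_div_iff₀' (by positivity)]
    exact hC v h hv hh
  have hincrement {h : ℝ} (hh : |h| = δ) : h * psiExpError v ≤ (2 * C + 1) * exp v * δ ^ 2 := by
    have hend := le_of_abs_le (hprim (hh.trans_le hδ1))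
    have hstart := neg_le_of_abs_le (hprim (h := 0) (by simp))
    rw [add_zero] at hstart
    have hstep := mul_psiExpError_le (hh.trans_le hδ1) v
    rw [← sq_abs h, hh] at hstep
    linarith
  have habs : δ * |psiExpError v| ≤ (2 * C + 1) * exp v * δ ^ 2 := by
    rcases abs_choice (psiExpError v) with habs | habs
    · rw [habs]
      exact hincrement (abs_of_pos hδ0)
    · rw [habs, mul_neg, ← neg_mul]
      exact hincrement (by rw [abs_neg, abs_of_pos hδ0])
  rw [sq, ← mul_assoc, mul_comm, mul_le_mul_iff_left₀ hδ0] at habs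
  rwa [← le_div_iff₀' (by positivity), div_eq_mul_inv]

theorem psi_sub_id_isBigO (k : ℕ) :
    (fun x ↦ Chebyshev.psi x - x) =O[atTop] fun x ↦ x / log x ^ k := by
  obtain ⟨C, hC⟩ := exists_pow_mul_abs_psiExpError_le k
  refine .of_bound C ?_
  filter_upwards [tendsto_log_atTop.eventually_ge_atTop 2, eventually_gt_atTop 0] with x hx hx0
  have h := hC _ hx
  rw [psiExpError, exp_log hx0] at h
  have hlog : 0 < log x ^ k := by positivity
  rw [norm_of_nonneg (div_nonneg hx0.le hlog.le), norm_eq_abs, ← mul_div_assoc,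
    le_div_iff₀' hlog]
  exact h

lemma sqrt_isBigO_div_log : sqrt =O[atTop] fun x ↦ x / log x := by
  refine .of_bound 2 ?_
  filter_upwards [eventually_gt_atTop 1] with x hx
  have hx0 : 0 ≤ x := by linarith
  have hlog : 0 < log x := log_pos hx
  have hlog_le : log x ≤ 2 * sqrt x := by
    rw [sqrt_eq_rpow]
    linarith [log_le_rpow_div hx0 one_half_pos]
  rw [norm_of_nonneg (sqrt_nonneg x), norm_of_nonneg (by positivity), ← mul_div_assoc,
    le_div_iff₀ hlog]
  calc sqrt x * log x ≤ sqrt x * (2 * sqrt x) := by gcongr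
    _ = 2 * x := by rw [mul_left_comm, mul_self_sqrt hx0]

theorem primePi_sub_div_log_isBigO :
    (fun x ↦ (primePi x : ℝ) - x / log x) =O[atTop] fun x ↦ x / log x ^ 2 := by
  have htheta : (fun x ↦ Chebyshev.theta x - x) =O[atTop] fun x ↦ x / log x := by
    have hpsi : (fun x ↦ Chebyshev.psi x - x) =O[atTop] fun x ↦ x / log x := by
      simpa only [pow_one] using psi_sub_id_isBigO 1
    refine (hpsi.sub (Chebyshev.isBigO_psi_sub_theta_sqrt.trans sqrt_isBigO_div_log)).congr_left
      fun x ↦ ?_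
    rw [Pi.sub_apply]
    ring
  have hmain : (fun x ↦ (Chebyshev.theta x - x) * (log x)⁻¹) =O[atTop] fun x ↦ x / log x ^ 2 :=
    (htheta.mul (isBigO_refl (fun x ↦ (log x)⁻¹) atTop)).congr_right fun x ↦ by
      rw [div_mul_eq_mul_div, sq, ← div_div, ← div_eq_mul_inv]
  refine (Chebyshev.primeCounting_sub_theta_div_log_isBigO.add hmain).congr_left fun x ↦ ?_
  rw [primePi]
  ring

end Chebyshev

section ShortIntervals

open Asymptotics

variable {ι : Type*} {l : Filter ι} {x δ : ι → ℝ}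

lemma tendsto_exp_sub_one_div : Tendsto (fun h ↦ (exp h - 1) / h) (nhdsWithin 0 {0}ᶜ) (nhds 1) := by
  simpa [div_eq_inv_mul] using (hasDerivAt_exp 0).tendsto_slope_zero

lemma eventually_pos_of_tendsto_mul_log (hx : Tendsto x l atTop)
    (hδx : Tendsto (fun i ↦ δ i * log (x i)) l atTop) :
    ∀ᶠ i in l, 0 < δ i := by
  filter_upwards [(tendsto_log_atTop.comp hx).eventually_gt_atTop 0,
    hδx.eventually_gt_atTop 0] with i hlog hmul
  exact pos_of_mul_pos_left hmul hlog.le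

lemma tendsto_div_log_increment (hx : Tendsto x l atTop) (hδ : Tendsto δ l (nhds 0))
    (hδx : Tendsto (fun i ↦ δ i * log (x i)) l atTop) :
    Tendsto (fun i ↦ (x i * exp (δ i) / log (x i * exp (δ i)) - x i / log (x i)) /
      (δ i * x i / log (x i))) l (nhds 1) := by
  have hlog : Tendsto (fun i ↦ log (x i)) l atTop := tendsto_log_atTop.comp hx
  have hpos := eventually_pos_of_tendsto_mul_log hx hδx
  have hexp : Tendsto (fun i ↦ (exp (δ i) - 1) / δ i) l (nhds 1) :=
    tendsto_exp_sub_one_div.comp <| tendsto_nhdsWithin_iff.mpr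
      ⟨hδ, hpos.mono fun i hi ↦ hi.ne'⟩
  have hlim : Tendsto (fun i ↦ ((exp (δ i) - 1) / δ i - (log (x i))⁻¹) /
      (1 + δ i * (log (x i))⁻¹)) l (nhds ((1 - 0) / (1 + 0 * 0))) :=
    (hexp.sub hlog.inv_tendsto_atTop).div
      ((hδ.mul hlog.inv_tendsto_atTop).const_add 1) (by norm_num)
  rw [sub_zero, zero_mul, add_zero, div_one] at hlim
  refine hlim.congr' ?_
  filter_upwards [hpos, hx.eventually_gt_atTop 0, hlog.eventually_gt_atTop 0] with i hδi hxi hli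
  rw [log_mul hxi.ne' (exp_pos _).ne', log_exp]
  have hsum : log (x i) + δ i ≠ 0 := by positivity
  field_simp
  ring

lemma primePi_error_isLittleO (hx : Tendsto x l atTop)
    (hδx : Tendsto (fun i ↦ δ i * log (x i)) l atTop) :
    (fun i ↦ (primePi (x i) : ℝ) - x i / log (x i)) =o[l] fun i ↦ δ i * x i / log (x i) := by
  refine (primePi_sub_div_log_isBigO.comp_tendsto hx).trans_isLittleO ?_
  have hne : ∀ᶠ i in l, x i ≠ 0 ∧ log (x i) ≠ 0 ∧ δ i ≠ 0 := by
    filter_upwards [hx.eventually_ne_atTop 0, (tendsto_log_atTop.comp hx).eventually_ne_atTop 0,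
      eventually_pos_of_tendsto_mul_log hx hδx] with i hxi hlog hδi
    exact ⟨hxi, hlog, hδi.ne'⟩
  refine (isLittleO_iff_tendsto' ?_).mpr (hδx.inv_tendsto_atTop.congr' ?_)
  · filter_upwards [hne] with i ⟨hxi, hlog, hδi⟩ hzero
    exact absurd hzero (by positivity)
  · filter_upwards [hne] with i ⟨hxi, hlog, hδi⟩
    simp only [Pi.inv_apply, Function.comp_apply]
    field_simp

lemma primePi_error_mul_exp_isLittleO (hx : Tendsto x l atTop) (hδ : Tendsto δ l (nhds 0))
    (hδx : Tendsto (fun i ↦ δ i * log (x i)) l atTop) :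
    (fun i ↦ (primePi (x i * exp (δ i)) : ℝ) - x i * exp (δ i) / log (x i * exp (δ i))) =o[l]
      fun i ↦ δ i * x i / log (x i) := by
  have hlog : Tendsto (fun i ↦ log (x i)) l atTop := tendsto_log_atTop.comp hx
  have hexp : Tendsto (fun i ↦ exp (δ i)) l (nhds 1) := by
    simpa only [exp_zero] using hδ.rexp
  have hlog_mul : ∀ᶠ i in l, log (x i * exp (δ i)) = log (x i) + δ i := by
    filter_upwards [hx.eventually_ne_atTop 0] with i hxi
    rw [log_mul hxi (exp_pos _).ne', log_exp]
  have hδy : Tendsto (fun i ↦ δ i * log (x i * exp (δ i))) l atTop := by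
    refine (hδx.atTop_add (hδ.mul hδ)).congr' (hlog_mul.mono fun i hi ↦ ?_)
    simp only [hi, mul_add]
  refine (primePi_error_isLittleO (hx.atTop_mul_pos one_pos hexp) hδy).trans_isBigO
    (.of_bound (exp 1) ?_)
  filter_upwards [hlog_mul, eventually_pos_of_tendsto_mul_log hx hδx, hx.eventually_gt_atTop 0,
    hlog.eventually_gt_atTop 0, hδ.eventually_le_const one_pos] with i hmul hδi hxi hli hδi1
  rw [hmul, norm_of_nonneg (by positivity), norm_of_nonneg (by positivity)]
  calc δ i * (x i * exp (δ i)) / (log (x i) + δ i)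
      ≤ δ i * (x i * exp 1) / log (x i) := by
        gcongr
        exact le_add_of_nonneg_right hδi.le
    _ = exp 1 * (δ i * x i / log (x i)) := by ring

theorem tendsto_primePi_increment_div (hx : Tendsto x l atTop) (hδ : Tendsto δ l (nhds 0))
    (hδx : Tendsto (fun i ↦ δ i * log (x i)) l atTop) :
    Tendsto (fun i ↦ ((primePi (x i * exp (δ i)) : ℝ) - primePi (x i)) /
      (δ i * x i / log (x i))) l (nhds 1) := by
  have hmain := tendsto_div_log_increment hx hδ hδx
  have herror := (primePi_error_mul_exp_isLittleO hx hδ hδx).sub (primePi_error_isLittleO hx hδx)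
  have hlim := hmain.add herror.tendsto_div_nhds_zero
  rw [add_zero] at hlim
  refine hlim.congr fun i ↦ ?_
  ring

end ShortIntervals

theorem stmt0
    (ε : ℕ → ℝ) (hε : ∀ n, ε n ∈ Set.Ioo (0:ℝ) 1)
    (hε0 : Tendsto ε atTop (nhds 0))
    (hnε : Tendsto (fun n : ℕ => (n : ℝ) * ε n) atTop atTop)
    (a t : ℝ) (ht : 0 < t) :
    Tendsto
      (fun n : ℕ =>
        ((primePi (Real.exp (((n : ℝ) + a + ε n) / t)) : ℝ)
            - (primePi (Real.exp (((n : ℝ) + a) / t)) : ℝ))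
          / (Real.exp ((n : ℝ) / t) * ε n / (n : ℝ)))
      atTop (nhds (Real.exp (a / t))) := by
  have hn : Tendsto (fun n : ℕ ↦ (n : ℝ) + a) atTop atTop :=
    tendsto_atTop_add_const_right _ a tendsto_natCast_atTop_atTop
  have hx : Tendsto (fun n : ℕ ↦ exp ((n + a) / t)) atTop atTop :=
    tendsto_exp_atTop.comp (hn.atTop_div_const ht)
  have hδ : Tendsto (fun n ↦ ε n / t) atTop (nhds 0) := by
    simpa only [zero_div] using hε0.div_const t
  have hδx : Tendsto (fun n : ℕ ↦ ε n / t * log (exp ((n + a) / t))) atTop atTop := by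
    refine ((hnε.atTop_add (hε0.const_mul a)).atTop_div_const (sq_pos_of_pos ht)).congr fun n ↦ ?_
    rw [log_exp]
    ring
  have hratio : Tendsto (fun n : ℕ ↦ exp (a / t) * ((n : ℝ) / (n + a))) atTop
      (nhds (exp (a / t) * 1)) :=
    (tendsto_natCast_div_add_atTop a).const_mul _
  have hlim := (tendsto_primePi_increment_div hx hδ hδx).mul hratio
  rw [one_mul, mul_one] at hlim
  refine hlim.congr' ?_
  filter_upwards [eventually_gt_atTop 0, hn.eventually_gt_atTop 0] with n hn0 hna
  have hεn := (hε n).1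
  rw [log_exp, ← exp_add, ← add_div, add_div (n : ℝ) a, exp_add]
  field_simp
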